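/- The function h₁ is strictly increasing on [0,f₀] with h₁(0)=−λ/(2α²) and h₁(f₀)=0. Moreover, fix c>0 and suppose Ĥ₃(f₀+c,c) ∈ (−λ/(2α²),0), and let z ∈ (0,f₀) be the unique point with h₁(z)=Ĥ₃(f₀+c,c). Then Ĥ₄(f₀+c,c) < h₂(z) if and only if the tangent line to H_r(·;c) at ŷ₃(c)=Ψ(f₀+c), namely y ↦ H_r(ŷ₃(c);c) + ∂H_r/∂y(ŷ₃(c);c)·(y − ŷ₃(c)), lies strictly below H_l(y) for every y ≥ 1. -/

import Mathlib

/-!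
Put `s = √(2α)`. In the coordinate `y = exp (2 s x)` a payoff `h` becomes
`H y = √y * h (log y / (2 s))`, and the tangent line to `H` at `exp (2 s x)` has slope
`exp (-x s) / (2 s) * (h' x + s * h x)` and intercept `exp (x s) / (2 s) * (-h' x + s * h x)`.
Thus `h₁`, `h₂` are the tangent slope and intercept of `H_l`, while `Ĥ₃`, `Ĥ₄` at `f₀ + c` are those
of `H_r`, whose two branches join with equal derivatives there. The choice of `z` makes the tangent
to `H_l` at `exp (2 s z)` parallel to the tangent to `H_r` at `ŷ₃ c`. Since `h₁` is below `h₁ z` on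
`[0, z]` and above it afterwards, `y ↦ H_l y - h₁ z * y` is minimal over `[1, ∞)` at `exp (2 s z)`;
so comparing the line with `H_l` on `[1, ∞)` amounts to comparing intercepts of parallel lines.
-/

noncomputable section

open Set Real

/-- The payoff `h` in the coordinate `y = exp (2 * s * x)`, normalized by the decreasing solution
`exp (-s * x)` of `u'' = s ^ 2 * u`. It is meant for `y > 0` and `s ≠ 0`. -/
def expTransform (s : ℝ) (h : ℝ → ℝ) (y : ℝ) : ℝ :=
  √y * h (log y / (2 * s))

/-- The slope of the tangent line to `expTransform s h` at `exp (2 * s * x)`. -/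
def tangentSlope (s : ℝ) (h : ℝ → ℝ) (x : ℝ) : ℝ :=
  exp (-x * s) / (2 * s) * (deriv h x + s * h x)

/-- The value at `0` of the tangent line to `expTransform s h` at `exp (2 * s * x)`. -/
def tangentIntercept (s : ℝ) (h : ℝ → ℝ) (x : ℝ) : ℝ :=
  exp (x * s) / (2 * s) * (-deriv h x + s * h x)

section Transform

variable {s : ℝ} {h : ℝ → ℝ} {x : ℝ}

theorem sqrt_exp_two_mul (s x : ℝ) : √(exp (2 * s * x)) = exp (x * s) := by
  rw [← exp_half]
  ring_nf

theorem log_exp_two_mul_div (hs : s ≠ 0) (x : ℝ) : log (exp (2 * s * x)) / (2 * s) = x := by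
  rw [log_exp]
  field_simp

theorem expTransform_exp (hs : s ≠ 0) (h : ℝ → ℝ) (x : ℝ) :
    expTransform s h (exp (2 * s * x)) = exp (x * s) * h x := by
  rw [expTransform, sqrt_exp_two_mul, log_exp_two_mul_div hs]

theorem hasDerivAt_expTransform (hs : s ≠ 0) (hh : DifferentiableAt ℝ h x) :
    HasDerivAt (expTransform s h) (tangentSlope s h x) (exp (2 * s * x)) := by
  have hy : exp (2 * s * x) ≠ 0 := (exp_pos _).ne'
  have hlog := (hasDerivAt_log hy).div_const (2 * s)
  have hcomp := hh.hasDerivAt.comp_of_eq _ hlog (log_exp_two_mul_div hs x).symm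
  refine ((hasDerivAt_sqrt hy).mul hcomp).congr_deriv ?_
  have hsq : exp (2 * s * x) = exp (x * s) * exp (x * s) := by rw [← exp_add]; ring_nf
  have hinv : exp (-x * s) = (exp (x * s))⁻¹ := by rw [← exp_neg]; ring_nf
  simp only [Function.comp_apply, log_exp_two_mul_div hs, sqrt_exp_two_mul, tangentSlope]
  rw [hsq, hinv]
  field_simp
  ring

theorem tangentSlope_mul_exp_add_tangentIntercept (hs : s ≠ 0) (h : ℝ → ℝ) (x : ℝ) :
    tangentSlope s h x * exp (2 * s * x) + tangentIntercept s h x =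
      expTransform s h (exp (2 * s * x)) := by
  have hexp : exp (-x * s) * exp (2 * s * x) = exp (x * s) := by rw [← exp_add]; ring_nf
  rw [expTransform_exp hs, tangentSlope, tangentIntercept]
  linear_combination (deriv h x + s * h x) / (2 * s) * hexp +
    exp (x * s) * h x * mul_inv_cancel₀ hs

theorem tangentLine_eq_of_eqOn_expTransform (hs : s ≠ 0) (hh : DifferentiableAt ℝ h x) {H : ℝ → ℝ}
    (hH : EqOn H (expTransform s h) (Ioi 0)) (y : ℝ) :
    H (exp (2 * s * x)) + deriv H (exp (2 * s * x)) * (y - exp (2 * s * x)) =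
      tangentSlope s h x * y + tangentIntercept s h x := by
  rw [(hH.eventuallyEq_of_mem (Ioi_mem_nhds (exp_pos _))).deriv_eq, hH (exp_pos _),
    (hasDerivAt_expTransform hs hh).deriv, ← tangentSlope_mul_exp_add_tangentIntercept hs]
  ring

/-- This says that `expTransform s h` is strictly convex where `h'' - s² h > 0`. -/
theorem strictMonoOn_tangentSlope (hs : 0 < s) {D : Set ℝ} (hD : Convex ℝ D)
    (hh : Differentiable ℝ h) (hh' : Differentiable ℝ (deriv h))
    (hpos : ∀ x ∈ interior D, s ^ 2 * h x < deriv (deriv h) x) :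
    StrictMonoOn (tangentSlope s h) D := by
  have hderiv (x : ℝ) : HasDerivAt (tangentSlope s h)
      (exp (-x * s) / (2 * s) * (deriv (deriv h) x - s ^ 2 * h x)) x := by
    have hexp := (((hasDerivAt_id x).neg.mul_const s).exp).div_const (2 * s)
    have hsum := (hh' x).hasDerivAt.add ((hh x).hasDerivAt.const_mul s)
    refine (hexp.mul hsum).congr_deriv ?_
    simp only [Pi.neg_apply, Pi.add_apply, id_eq]
    ring
  refine strictMonoOn_of_deriv_pos hD (fun x _ ↦ (hderiv x).continuousAt.continuousWithinAt)
    fun x hx ↦ ?_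
  rw [(hderiv x).deriv]
  have := sub_pos.2 (hpos x hx)
  positivity

theorem isMinOn_expTransform_sub_tangentSlope_mul (hs : 0 < s) {x₀ z : ℝ}
    (hh : ∀ x, x₀ ≤ x → DifferentiableAt ℝ h x) (hz : x₀ ≤ z)
    (hle : ∀ x ∈ Icc x₀ z, tangentSlope s h x ≤ tangentSlope s h z)
    (hge : ∀ x ∈ Ici z, tangentSlope s h z ≤ tangentSlope s h x) :
    IsMinOn (fun x ↦ expTransform s h (exp (2 * s * x)) - tangentSlope s h z * exp (2 * s * x))
      (Ici x₀) z := by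
  have hderiv {x : ℝ} (hx : x₀ ≤ x) :
      HasDerivAt
        (fun x ↦ expTransform s h (exp (2 * s * x)) - tangentSlope s h z * exp (2 * s * x))
        ((tangentSlope s h x - tangentSlope s h z) * (2 * s * exp (2 * s * x))) x := by
    have hexp := ((hasDerivAt_id x).const_mul (2 * s)).exp
    refine (((hasDerivAt_expTransform hs.ne' (hh x hx)).comp x hexp).sub
      (hexp.const_mul (tangentSlope s h z))).congr_deriv ?_
    simp only [id_eq]
    ring
  refine isMinOn_Ici_of_deriv (hderiv le_rfl).continuousAt (hderiv hz).continuousAt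
    (fun x hx ↦ (hderiv hx.1.le).differentiableAt.differentiableWithinAt)
    (fun x hx ↦ (hderiv (hz.trans (le_of_lt hx))).differentiableAt.differentiableWithinAt)
    (fun x hx ↦ ?_) (fun x hx ↦ ?_)
  · rw [(hderiv hx.1.le).deriv]
    exact mul_nonpos_of_nonpos_of_nonneg (sub_nonpos.2 (hle x (Ioo_subset_Icc_self hx)))
      (by positivity)
  · rw [(hderiv (hz.trans (le_of_lt hx))).deriv]
    exact mul_nonneg (sub_nonneg.2 (hge x (Ioi_subset_Ici_self hx))) (by positivity)

theorem forall_line_lt_expTransform_iff (hs : 0 < s) {x₀ z : ℝ}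
    (hh : ∀ x, x₀ ≤ x → DifferentiableAt ℝ h x) (hz : x₀ ≤ z)
    (hle : ∀ x ∈ Icc x₀ z, tangentSlope s h x ≤ tangentSlope s h z)
    (hge : ∀ x ∈ Ici z, tangentSlope s h z ≤ tangentSlope s h x) (b : ℝ) :
    (∀ y, exp (2 * s * x₀) ≤ y → tangentSlope s h z * y + b < expTransform s h y) ↔
      b < tangentIntercept s h z := by
  have htouch := tangentSlope_mul_exp_add_tangentIntercept hs.ne' h z
  refine ⟨fun hlt ↦ ?_, fun hb y hy ↦ ?_⟩
  · have := hlt (exp (2 * s * z)) (by gcongr)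
    linarith
  · have hy₀ : 0 < y := (exp_pos _).trans_le hy
    obtain ⟨x, rfl⟩ : ∃ x, exp (2 * s * x) = y :=
      ⟨log y / (2 * s), by rw [mul_div_cancel₀ _ (by positivity), exp_log hy₀]⟩
    have hx : x₀ ≤ x := (mul_le_mul_iff_right₀ (by positivity)).1 (exp_le_exp.1 hy)
    have := isMinOn_iff.1 (isMinOn_expTransform_sub_tangentSlope_mul hs hh hz hle hge) x hx
    linarith

end Transform

section QuadraticPayoff

/-- The quadratic payoff `A * x ^ 2 - B`, with the constant entering with a minus sign because the
application has `A, B > 0`. -/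
def quadraticPayoff (A B x : ℝ) : ℝ :=
  A * x ^ 2 - B

variable {A B s r : ℝ}

theorem hasDerivAt_quadraticPayoff (A B x : ℝ) :
    HasDerivAt (quadraticPayoff A B) (2 * A * x) x := by
  refine (((hasDerivAt_pow 2 x).const_mul A).sub_const B).congr_deriv ?_
  ring

theorem differentiable_quadraticPayoff (A B : ℝ) : Differentiable ℝ (quadraticPayoff A B) :=
  fun x ↦ (hasDerivAt_quadraticPayoff A B x).differentiableAt

theorem deriv_quadraticPayoff (A B : ℝ) : deriv (quadraticPayoff A B) = fun x ↦ 2 * A * x :=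
  funext fun x ↦ (hasDerivAt_quadraticPayoff A B x).deriv

theorem tangentSlope_quadraticPayoff (hs : s ≠ 0) (A B x : ℝ) :
    tangentSlope s (quadraticPayoff A B) x =
      exp (-x * s) / 2 * (A * (x ^ 2 + 2 * x / s) - B) := by
  simp only [tangentSlope, deriv_quadraticPayoff, quadraticPayoff]
  field_simp
  ring

theorem tangentIntercept_quadraticPayoff (hs : s ≠ 0) (A B x : ℝ) :
    tangentIntercept s (quadraticPayoff A B) x =
      exp (x * s) / 2 * (A * (x ^ 2 - 2 * x / s) - B) := by
  simp only [tangentIntercept, deriv_quadraticPayoff, quadraticPayoff]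
  field_simp
  ring

theorem tangentSlope_quadraticPayoff_eq_zero (hs : s ≠ 0) (hr : A * (r ^ 2 + 2 * r / s) = B) :
    tangentSlope s (quadraticPayoff A B) r = 0 := by
  rw [tangentSlope_quadraticPayoff hs, hr, sub_self, mul_zero]

theorem tangentSlope_quadraticPayoff_nonneg (hs : 0 < s) (hA : 0 ≤ A) (hr₀ : 0 ≤ r)
    (hr : A * (r ^ 2 + 2 * r / s) = B) {x : ℝ} (hx : r ≤ x) :
    0 ≤ tangentSlope s (quadraticPayoff A B) x := by
  rw [tangentSlope_quadraticPayoff hs.ne', ← hr, ← mul_sub]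
  have : r ^ 2 + 2 * r / s ≤ x ^ 2 + 2 * x / s := by gcongr
  have := sub_nonneg.2 this
  positivity

theorem strictMonoOn_tangentSlope_quadraticPayoff (hs : 0 < s) (hA : 0 < A)
    (hr : A * (r ^ 2 + 2 * r / s) = B) :
    StrictMonoOn (tangentSlope s (quadraticPayoff A B)) (Icc 0 r) := by
  refine strictMonoOn_tangentSlope hs (convex_Icc 0 r) (differentiable_quadraticPayoff A B)
    (by rw [deriv_quadraticPayoff]; fun_prop) fun x hx ↦ ?_
  rw [interior_Icc] at hx
  have hr₀ : 0 < r := hx.1.trans hx.2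
  have hpayoff : quadraticPayoff A B x ≤ 0 := by
    have hxr : A * x ^ 2 ≤ A * r ^ 2 := by gcongr; exacts [hx.1.le, hx.2.le]
    have : 0 < A * (2 * r / s) := by positivity
    rw [quadraticPayoff]
    linarith
  calc s ^ 2 * quadraticPayoff A B x ≤ 0 := mul_nonpos_of_nonneg_of_nonpos (sq_nonneg s) hpayoff
    _ < 2 * A := by positivity
    _ = deriv (deriv (quadraticPayoff A B)) x := by simp [deriv_quadraticPayoff]

theorem forall_line_lt_expTransform_quadraticPayoff_iff (hs : 0 < s) (hA : 0 < A)
    (hr : A * (r ^ 2 + 2 * r / s) = B) {z : ℝ} (hz : z ∈ Icc 0 r) (b : ℝ) :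
    (∀ y, 1 ≤ y → tangentSlope s (quadraticPayoff A B) z * y + b <
      expTransform s (quadraticPayoff A B) y) ↔ b < tangentIntercept s (quadraticPayoff A B) z := by
  have hr₀ : 0 ≤ r := hz.1.trans hz.2
  have hmono := (strictMonoOn_tangentSlope_quadraticPayoff hs hA hr).monotoneOn
  have hbefore (x : ℝ) (hx : x ∈ Icc 0 z) :
      tangentSlope s (quadraticPayoff A B) x ≤ tangentSlope s (quadraticPayoff A B) z :=
    hmono ⟨hx.1, hx.2.trans hz.2⟩ hz hx.2
  have hafter (x : ℝ) (hx : z ≤ x) :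
      tangentSlope s (quadraticPayoff A B) z ≤ tangentSlope s (quadraticPayoff A B) x := by
    rcases le_total x r with hxr | hrx
    · exact hmono hz ⟨hz.1.trans hx, hxr⟩ hx
    · calc tangentSlope s (quadraticPayoff A B) z
          ≤ tangentSlope s (quadraticPayoff A B) r := hmono hz ⟨hr₀, le_rfl⟩ hz.2
        _ = 0 := tangentSlope_quadraticPayoff_eq_zero hs.ne' hr
        _ ≤ tangentSlope s (quadraticPayoff A B) x :=
          tangentSlope_quadraticPayoff_nonneg hs hA.le hr₀ hr hrx
  simpa using forall_line_lt_expTransform_iff hs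
    (fun x _ ↦ differentiable_quadraticPayoff A B x) hz.1 hbefore hafter b

theorem mul_sq_add_two_mul_div_eq_of_eq_sqrt (hs : s ≠ 0) (hA : A ≠ 0)
    (hdisc : 0 ≤ 1 + s ^ 2 * B / A) (hr : r = 1 / s * (√(1 + s ^ 2 * B / A) - 1)) :
    A * (r ^ 2 + 2 * r / s) = B := by
  have hsquare : (s * r + 1) ^ 2 = 1 + s ^ 2 * B / A := by
    rw [← sq_sqrt hdisc, hr]
    field_simp
    ring
  field_simp at hsquare ⊢
  apply mul_left_cancel₀ hs
  linear_combination hsquare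

end QuadraticPayoff

section LeftPayoff

/-- The payoff whose `expTransform` is `H_l` when `s ^ 2 = 2 * α`. -/
abbrev leftPayoff (α δ lam : ℝ) : ℝ → ℝ :=
  quadraticPayoff (δ - lam / α) (lam / α ^ 2)

variable {α δ lam s : ℝ}

theorem leftPayoff_leadingCoeff (hα : α ≠ 0) : δ - lam / α = (α * δ - lam) / α := by
  field_simp

theorem tangentSlope_leftPayoff (hs : s ≠ 0) (hα : α ≠ 0) (hD : α * δ - lam ≠ 0) (x : ℝ) :
    tangentSlope s (leftPayoff α δ lam) x = (α * δ - lam) / (2 * α) * exp (-x * s) *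
      (x ^ 2 + 2 * x / s - lam / α / (α * δ - lam)) := by
  rw [tangentSlope_quadraticPayoff hs, leftPayoff_leadingCoeff hα]
  generalize α * δ - lam = D at hD ⊢
  field_simp

theorem tangentIntercept_leftPayoff (hs : s ≠ 0) (hα : α ≠ 0) (hD : α * δ - lam ≠ 0) (x : ℝ) :
    tangentIntercept s (leftPayoff α δ lam) x = (α * δ - lam) / (2 * α) * exp (x * s) *
      (x ^ 2 + 2 * x / s - lam / α / (α * δ - lam) - 4 * x / s) := by
  rw [tangentIntercept_quadraticPayoff hs, leftPayoff_leadingCoeff hα]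
  generalize α * δ - lam = D at hD ⊢
  field_simp
  ring

theorem expTransform_leftPayoff (hs : s ^ 2 = 2 * α) (δ lam y : ℝ) :
    expTransform s (leftPayoff α δ lam) y =
      √y * (-(lam / α ^ 2) + (δ - lam / α) / (8 * α) * log y ^ 2) := by
  rw [expTransform, leftPayoff, quadraticPayoff, div_pow, mul_pow, hs]
  ring

theorem leftPayoff_slope_root {f₀ : ℝ} (hs₀ : s ≠ 0) (hs : s ^ 2 = 2 * α) (hα : α ≠ 0)
    (hD : α * δ - lam ≠ 0) (hdisc : 0 ≤ (α * δ + lam) / (α * δ - lam))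
    (hf₀ : f₀ = 1 / s * (√((α * δ + lam) / (α * δ - lam)) - 1)) :
    (δ - lam / α) * (f₀ ^ 2 + 2 * f₀ / s) = lam / α ^ 2 := by
  have hA : δ - lam / α ≠ 0 := leftPayoff_leadingCoeff hα ▸ div_ne_zero hD hα
  have hdisc_eq : (α * δ + lam) / (α * δ - lam) = 1 + s ^ 2 * (lam / α ^ 2) / (δ - lam / α) := by
    rw [hs, leftPayoff_leadingCoeff hα]
    field_simp
    ring
  rw [hdisc_eq] at hdisc hf₀
  exact mul_sq_add_two_mul_div_eq_of_eq_sqrt hs₀ hA hdisc hf₀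

end LeftPayoff

section SmoothFit

theorem hasDerivAt_of_eqOn_Iic_of_eqOn_Ici {f g₁ g₂ : ℝ → ℝ} {f' a : ℝ}
    (hg₁ : HasDerivAt g₁ f' a) (hg₂ : HasDerivAt g₂ f' a)
    (hleft : EqOn f g₁ (Iic a)) (hright : EqOn f g₂ (Ici a)) : HasDerivAt f f' a := by
  have hunion := (hg₁.hasDerivWithinAt.congr hleft (hleft self_mem_Iic)).union
    (hg₂.hasDerivWithinAt.congr hright (hright self_mem_Ici))
  rwa [Iic_union_Ici, hasDerivWithinAt_univ] at hunion

/-- The branch `h_{r1}(·; c)` of the right payoff, with `k = λ / α` and `K = λ / α ^ 2`. -/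
def rightPayoffInner (δ k K c x : ℝ) : ℝ :=
  δ * c * (c - 2 * x) + (δ - k) * x ^ 2 + c - K

/-- The branch `h_{r2}(·; c)` of the right payoff, with `k = λ / α`. -/
def rightPayoffOuter (s k B₀ c x : ℝ) : ℝ :=
  k * c * (c - 2 * x) + c + B₀ * exp (-(x - c) * s)

theorem hasDerivAt_rightPayoffInner (δ k K c x : ℝ) :
    HasDerivAt (rightPayoffInner δ k K c) (2 * (δ - k) * x - 2 * δ * c) x := by
  have haffine := (((hasDerivAt_id x).const_mul 2).const_sub c).const_mul (δ * c)
  have hquad := (hasDerivAt_pow 2 x).const_mul (δ - k)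
  refine (((haffine.add hquad).add_const c).sub_const K).congr_deriv ?_
  ring

theorem hasDerivAt_rightPayoffOuter (s k B₀ c x : ℝ) :
    HasDerivAt (rightPayoffOuter s k B₀ c) (-2 * k * c - B₀ * s * exp (-(x - c) * s)) x := by
  have haffine := (((hasDerivAt_id x).const_mul 2).const_sub c).const_mul (k * c)
  have hexp := ((((hasDerivAt_id x).sub_const c).neg.mul_const s).exp).const_mul B₀
  refine ((haffine.add_const c).add hexp).congr_deriv ?_
  simp only [Pi.neg_apply, id_eq]
  ring

theorem hasDerivAt_rightPayoff {δ k K s B₀ f c : ℝ} {r : ℝ → ℝ}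
    (hB₀ : B₀ * s = -(2 * f * (δ - k)) * exp (f * s))
    (hinner : EqOn r (rightPayoffInner δ k K c) (Iic (f + c)))
    (houter : EqOn r (rightPayoffOuter s k B₀ c) (Ici (f + c))) :
    HasDerivAt r (deriv (rightPayoffInner δ k K c) (f + c)) (f + c) := by
  have hexp : exp (f * s) * exp (-(f + c - c) * s) = 1 := by
    rw [← exp_add, exp_eq_one_iff]
    ring
  rw [(hasDerivAt_rightPayoffInner δ k K c (f + c)).deriv]
  refine hasDerivAt_of_eqOn_Iic_of_eqOn_Ici (hasDerivAt_rightPayoffInner δ k K c (f + c))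
    ((hasDerivAt_rightPayoffOuter s k B₀ c (f + c)).congr_deriv ?_) hinner houter
  rw [hB₀]
  linear_combination (2 * f * (δ - k)) * hexp

end SmoothFit

end

theorem stmt_12_general (α δ lam : ℝ) (hα : 0 < α) (hlam : 0 < lam)
    (hltd : lam < α * δ)
    (ρ : ℝ → ℝ)
    (hρ : ∀ x, ρ x = x ^ 2 + 2 * x / Real.sqrt (2 * α) - (lam / α) / (α * δ - lam))
    (f₀ : ℝ)
    (hf₀ : f₀ = (1 / Real.sqrt (2 * α)) * (Real.sqrt ((α * δ + lam) / (α * δ - lam)) - 1))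
    (Ψ : ℝ → ℝ) (hΨ : ∀ x, Ψ x = Real.exp (2 * Real.sqrt (2 * α) * x))
    (Hl : ℝ → ℝ)
    (hHl : ∀ y, 0 < y → Hl y = Real.sqrt y *
      (-(lam / α ^ 2) + ((δ - lam / α) / (8 * α)) * (Real.log y) ^ 2))
    (B₀ : ℝ)
    (hB₀ : B₀ = -(2 * f₀ / (α * Real.sqrt (2 * α))) * (α * δ - lam) *
      Real.exp (f₀ * Real.sqrt (2 * α)))
    (hr1 hr2 hr Hr : ℝ → ℝ → ℝ)
    (hhr1 : ∀ c x, hr1 c x = δ * c * (c - 2 * x) + (δ - lam / α) * x ^ 2 + c - lam / α ^ 2)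
    (hhr2 : ∀ c x, hr2 c x = (lam / α) * c * (c - 2 * x) + c +
      B₀ * Real.exp (-(x - c) * Real.sqrt (2 * α)))
    (hhra : ∀ c x, x ≤ f₀ + c → hr c x = hr1 c x)
    (hhrb : ∀ c x, f₀ + c ≤ x → hr c x = hr2 c x)
    (hHr : ∀ c y, 0 < y → Hr c y = Real.sqrt y * hr c (Real.log y / (2 * Real.sqrt (2 * α))))
    (H₃ H₄ : ℝ → ℝ → ℝ)
    (hH₃ : ∀ x c, H₃ x c = (Real.exp (-x * Real.sqrt (2 * α)) / (2 * Real.sqrt (2 * α))) *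
      (deriv (hr1 c) x + Real.sqrt (2 * α) * hr1 c x))
    (hH₄ : ∀ x c, H₄ x c = (Real.exp (x * Real.sqrt (2 * α)) / (2 * Real.sqrt (2 * α))) *
      (-deriv (hr1 c) x + Real.sqrt (2 * α) * hr1 c x))
    (h₁ h₂ : ℝ → ℝ)
    (hh₁ : ∀ x, h₁ x = ((α * δ - lam) / (2 * α)) * Real.exp (-x * Real.sqrt (2 * α)) * ρ x)
    (hh₂ : ∀ x, h₂ x = ((α * δ - lam) / (2 * α)) * Real.exp (x * Real.sqrt (2 * α)) *
      (ρ x - 4 * x / Real.sqrt (2 * α)))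
    (c z : ℝ) (hz : z ∈ Set.Icc 0 f₀) (hzeq : h₁ z = H₃ (f₀ + c) c) :
    StrictMonoOn h₁ (Set.Icc 0 f₀) ∧
    h₁ 0 = -(lam / (2 * α ^ 2)) ∧ h₁ f₀ = 0 ∧
    (H₄ (f₀ + c) c < h₂ z ↔
      ∀ y, 1 ≤ y →
        Hr c (Ψ (f₀ + c)) + deriv (Hr c) (Ψ (f₀ + c)) * (y - Ψ (f₀ + c)) < Hl y) := by
  have hs : 0 < √(2 * α) := by positivity
  have hs2 : √(2 * α) ^ 2 = 2 * α := Real.sq_sqrt (by positivity)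
  generalize √(2 * α) = s at *
  have hD : 0 < α * δ - lam := sub_pos.2 hltd
  have hA : 0 < δ - lam / α := sub_pos.2 ((div_lt_iff₀' hα).2 hltd)
  have hroot := leftPayoff_slope_root hs.ne' hs2 hα.ne' hD.ne' (div_pos (by linarith) hD).le hf₀
  obtain rfl : h₁ = tangentSlope s (leftPayoff α δ lam) := funext fun x ↦ by
    rw [hh₁, hρ, tangentSlope_leftPayoff hs.ne' hα.ne' hD.ne']
  obtain rfl : h₂ = tangentIntercept s (leftPayoff α δ lam) := funext fun x ↦ by
    rw [hh₂, hρ, tangentIntercept_leftPayoff hs.ne' hα.ne' hD.ne']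
  have hfit : HasDerivAt (hr c) (deriv (hr1 c) (f₀ + c)) (f₀ + c) := by
    obtain rfl : hr1 = rightPayoffInner δ (lam / α) (lam / α ^ 2) := funext₂ hhr1
    obtain rfl : hr2 = rightPayoffOuter s (lam / α) B₀ := funext₂ hhr2
    exact hasDerivAt_rightPayoff (by rw [hB₀]; field_simp) (hhra c) (hhrb c)
  have hline (y : ℝ) : Hr c (Ψ (f₀ + c)) + deriv (Hr c) (Ψ (f₀ + c)) * (y - Ψ (f₀ + c)) =
      tangentSlope s (leftPayoff α δ lam) z * y + H₄ (f₀ + c) c := by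
    rw [hΨ, tangentLine_eq_of_eqOn_expTransform hs.ne' hfit.differentiableAt (hHr c), hzeq,
      hH₃, hH₄, tangentSlope, tangentIntercept, hfit.deriv, hhra c _ le_rfl]
  refine ⟨strictMonoOn_tangentSlope_quadraticPayoff hs hA hroot, ?_,
    tangentSlope_quadraticPayoff_eq_zero hs.ne' hroot, ?_⟩
  · simp only [tangentSlope_quadraticPayoff hs.ne', neg_zero, zero_mul, Real.exp_zero]
    ring
  · rw [← forall_line_lt_expTransform_quadraticPayoff_iff hs hA hroot hz]
    refine forall₂_congr fun y hy ↦ ?_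
    rw [hline, hHl y (by linarith), expTransform_leftPayoff hs2]

/-- h₁ is strictly increasing on [0,f₀] with h₁(0)=−λ/(2α²), h₁(f₀)=0, and
the interpretation of the sign of L via the tangent at ŷ₃(c). -/
theorem stmt_12 (α δ lam : ℝ) (hα : 0 < α) (hδ : 0 < δ) (hlam : 0 < lam)
    (hltd : lam < α * δ)
    (ρ : ℝ → ℝ)
    (hρ : ∀ x, ρ x = x ^ 2 + 2 * x / Real.sqrt (2 * α) - (lam / α) / (α * δ - lam))
    (f₀ : ℝ)
    (hf₀ : f₀ = (1 / Real.sqrt (2 * α)) * (Real.sqrt ((α * δ + lam) / (α * δ - lam)) - 1))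
    (hf₀big : α / (2 * lam) < f₀)
    (Ψ : ℝ → ℝ) (hΨ : ∀ x, Ψ x = Real.exp (2 * Real.sqrt (2 * α) * x))
    (Hl : ℝ → ℝ)
    (hHl : ∀ y, 0 < y → Hl y = Real.sqrt y *
      (-(lam / α ^ 2) + ((δ - lam / α) / (8 * α)) * (Real.log y) ^ 2))
    (B₀ : ℝ)
    (hB₀ : B₀ = -(2 * f₀ / (α * Real.sqrt (2 * α))) * (α * δ - lam) *
      Real.exp (f₀ * Real.sqrt (2 * α)))
    (hr1 hr2 hr Hr : ℝ → ℝ → ℝ)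
    (hhr1 : ∀ c x, hr1 c x = δ * c * (c - 2 * x) + (δ - lam / α) * x ^ 2 + c - lam / α ^ 2)
    (hhr2 : ∀ c x, hr2 c x = (lam / α) * c * (c - 2 * x) + c +
      B₀ * Real.exp (-(x - c) * Real.sqrt (2 * α)))
    (hhra : ∀ c x, x ≤ f₀ + c → hr c x = hr1 c x)
    (hhrb : ∀ c x, f₀ + c ≤ x → hr c x = hr2 c x)
    (hHr : ∀ c y, 0 < y → Hr c y = Real.sqrt y * hr c (Real.log y / (2 * Real.sqrt (2 * α))))
    (H₃ H₄ : ℝ → ℝ → ℝ)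
    (hH₃ : ∀ x c, H₃ x c = (Real.exp (-x * Real.sqrt (2 * α)) / (2 * Real.sqrt (2 * α))) *
      (deriv (hr1 c) x + Real.sqrt (2 * α) * hr1 c x))
    (hH₄ : ∀ x c, H₄ x c = (Real.exp (x * Real.sqrt (2 * α)) / (2 * Real.sqrt (2 * α))) *
      (-deriv (hr1 c) x + Real.sqrt (2 * α) * hr1 c x))
    (h₁ h₂ : ℝ → ℝ)
    (hh₁ : ∀ x, h₁ x = ((α * δ - lam) / (2 * α)) * Real.exp (-x * Real.sqrt (2 * α)) * ρ x)
    (hh₂ : ∀ x, h₂ x = ((α * δ - lam) / (2 * α)) * Real.exp (x * Real.sqrt (2 * α)) *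
      (ρ x - 4 * x / Real.sqrt (2 * α)))
    -- fix c > 0 with Ĥ₃(f₀+c,c) ∈ (−λ/(2α²),0), and z the point where h₁(z)=Ĥ₃(f₀+c,c):
    (c : ℝ) (hc : 0 < c)
    (hH₃mem : H₃ (f₀ + c) c ∈ Set.Ioo (-(lam / (2 * α ^ 2))) 0)
    (z : ℝ) (hz : z ∈ Set.Ioo 0 f₀) (hzeq : h₁ z = H₃ (f₀ + c) c) :
    StrictMonoOn h₁ (Set.Icc 0 f₀) ∧
    h₁ 0 = -(lam / (2 * α ^ 2)) ∧ h₁ f₀ = 0 ∧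
    (H₄ (f₀ + c) c < h₂ z ↔
      ∀ y, 1 ≤ y →
        Hr c (Ψ (f₀ + c)) + deriv (Hr c) (Ψ (f₀ + c)) * (y - Ψ (f₀ + c)) < Hl y) :=
  stmt_12_general α δ lam hα hlam hltd ρ hρ f₀ hf₀ Ψ hΨ Hl hHl B₀ hB₀ hr1 hr2 hr Hr hhr1 hhr2 hhra
    hhrb hHr H₃ H₄ hH₃ hH₄ h₁ h₂ hh₁ hh₂ c z (Set.Ioo_subset_Icc_self hz) hzeq
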